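/- arXiv:2502.20262 — 2 statements merged into one kernel-verified Lean document; each statement's English description precedes it below -/
import Mathlib

section
/- Let α be a transition rate function on [d] in (D-Lip) satisfying (Erg), let Φ : S_d → ℝ be in (D-Lip), and define U(t,μ) := Φ(m(t;μ)). Let μ₀ ∈ S_d, let N ≥ 1, and let ξ₁,…,ξ_N be i.i.d. [d]-valued random variables with law μ₀, with empirical measure μ₀^N := (1/N) Σ_{i∈[N]} δ_{ξ_i}. Then there is a constant C, independent of t, N and μ₀, such that for all t ≥ 0, | E[U(t, μ₀^N)] − U(t, μ₀) | ≤ C/N. -/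
/-!
The map `G = Φ ∘ m t` admits a first-order Taylor expansion on the simplex,
`G ν = G μ + ∑ z, L z * (ν z - μ z) + O(|ν - μ|²)`, with a constant uniform in `t` and `μ`.
For `ν` the empirical measure of an i.i.d. sample of `μ` the linear term is centred and
`E |ν - μ|² ≤ d² / N`, which gives the `C / N` bound (`expect_bound`).

The Taylor expansion of a (D-Lip) function `F` (`taylor_simplex`) is the main point, as the
linear functional derivative is only a one-sided derivative towards the vertices. Extend `F` to the
cone of nonnegative vectors by `v ↦ F (v / ∑ v)`. The linear functional derivatives then become the
right partial derivatives of this extension, so the one-sided mean value inequality controls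
increments along nonnegative directions (`cone_step`, `cone_incr`). Two points `μ`, `ν` of the
simplex are joined through `w = max μ ν`, which is reached from both by moving upwards only.
The expansion of `G` follows by substituting the expansion of `m t` into that of `Φ`.
-/

open Finset Filter Topology

/-- The simplex of probability vectors on `Fin d`. -/
def simplex (d : ℕ) : Set (Fin d → ℝ) :=
  {μ | (∀ z, 0 ≤ μ z) ∧ ∑ z, μ z = 1}

/-- The ℓ¹ norm on `Fin d → ℝ`. -/
def l1 {d : ℕ} (v : Fin d → ℝ) : ℝ := ∑ z, |v z|

/-- The `z`-th standard basis vector (Dirac measure at `z`). -/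
def bvec {d : ℕ} (z : Fin d) : Fin d → ℝ := fun y => if y = z then 1 else 0

/-- Linear functional derivative: `δF/δm (μ, z) = v`. -/
def HasLFDerivAt {d : ℕ} (F : (Fin d → ℝ) → ℝ) (μ : Fin d → ℝ) (z : Fin d) (v : ℝ) : Prop :=
  Filter.Tendsto (fun ε : ℝ => (F ((1 - ε) • μ + ε • bvec z) - F μ) / ε)
    (nhdsWithin 0 (Set.Ioi 0)) (nhds v)

/-- Directional derivative `D^m_{yz} F (μ) = v`. -/
def HasDmDerivAt {d : ℕ} (F : (Fin d → ℝ) → ℝ) (μ : Fin d → ℝ) (y z : Fin d) (v : ℝ) : Prop :=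
  Filter.Tendsto (fun ε : ℝ => (F (μ + ε • (bvec z - bvec y)) - F μ) / ε)
    (nhdsWithin 0 (Set.Ioi 0)) (nhds v)

/-- `α` is a transition rate function on `[d]`. -/
def IsRate (d : ℕ) (α : (Fin d → ℝ) → Matrix (Fin d) (Fin d) ℝ) : Prop :=
  ContinuousOn α (simplex d) ∧
  (∀ μ ∈ simplex d, ∀ x y, x ≠ y → 0 ≤ α μ x y) ∧
  (∀ μ ∈ simplex d, ∀ x, ∑ y, α μ x y = 0)

/-- `m` is the measure flow solving the nonlinear Kolmogorov equation for `α`. -/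
def IsFlow {d : ℕ} (α : (Fin d → ℝ) → Matrix (Fin d) (Fin d) ℝ)
    (m : ℝ → (Fin d → ℝ) → Fin d → ℝ) : Prop :=
  ∀ μ ∈ simplex d, m 0 μ = μ ∧ (∀ t, 0 ≤ t → m t μ ∈ simplex d) ∧
    ∀ t, 0 ≤ t → HasDerivAt (fun s => m s μ) (Matrix.vecMul (m t μ) (α (m t μ))) t

/-- A real-valued function on the simplex is in (D-Lip) with linear functional derivative `δF`. -/
def DLipR {d : ℕ} (F : (Fin d → ℝ) → ℝ) (δF : (Fin d → ℝ) → Fin d → ℝ) : Prop :=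
  (∃ K : ℝ, ∀ μ ∈ simplex d, ∀ ν ∈ simplex d, |F μ - F ν| ≤ K * l1 (μ - ν)) ∧
  (∀ μ ∈ simplex d, ∀ z, HasLFDerivAt F μ z (δF μ z)) ∧
  (∃ K : ℝ, ∀ μ ∈ simplex d, ∀ ν ∈ simplex d, l1 (δF μ - δF ν) ≤ K * l1 (μ - ν))

/-- The matrix-valued transition rate function is in (D-Lip), componentwise. -/
def DLipRate {d : ℕ} (α : (Fin d → ℝ) → Matrix (Fin d) (Fin d) ℝ)
    (δα : (Fin d → ℝ) → Fin d → Matrix (Fin d) (Fin d) ℝ) : Prop :=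
  ∀ x y, DLipR (fun μ => α μ x y) (fun μ z => δα μ z x y)

/-- The ergodicity assumption (Erg) for the flow `m`, with derivative data `δm`. -/
def Erg {d : ℕ} (m : ℝ → (Fin d → ℝ) → Fin d → ℝ)
    (δm : ℝ → (Fin d → ℝ) → Fin d → Fin d → ℝ) (lam c₁ k₁ : ℝ) : Prop :=
  0 < lam ∧ 0 < c₁ ∧ 0 < k₁ ∧
  (∀ t, 0 ≤ t → ∀ μ ∈ simplex d, ∀ μ' ∈ simplex d,
    l1 (m t μ - m t μ') ≤ c₁ * Real.exp (-lam * t) * l1 (μ - μ')) ∧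
  (∀ t, 0 ≤ t → ∀ μ ∈ simplex d, ∀ z x, HasLFDerivAt (fun ν => m t ν x) μ z (δm t μ z x)) ∧
  (∀ t, 0 ≤ t → ∀ μ ∈ simplex d, ∀ μ' ∈ simplex d, ∀ z,
    l1 (δm t μ z - δm t μ' z) ≤ k₁ * l1 (μ - μ'))

/-- Empirical measure of a configuration of `N` particles. -/
noncomputable def empMeas {d N : ℕ} (x : Fin N → Fin d) : Fin d → ℝ :=
  fun z => (∑ i, if x i = z then (1 : ℝ) else 0) / N

/-- Generator of the `N`-particle Markov chain. -/
noncomputable def genQ {d N : ℕ} (α : (Fin d → ℝ) → Matrix (Fin d) (Fin d) ℝ)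
    (F : (Fin N → Fin d) → ℝ) (x : Fin N → Fin d) : ℝ :=
  ∑ i, ∑ y ∈ Finset.univ.filter (fun y => y ≠ x i),
    α (empMeas x) (x i) y * (F (Function.update x i y) - F x)

/-- `p` is the law of the `N`-particle chain: a curve of probability vectors solving the
forward Kolmogorov equation (in weak form, tested against all functions). -/
def IsLaw {d N : ℕ} (α : (Fin d → ℝ) → Matrix (Fin d) (Fin d) ℝ)
    (p : ℝ → (Fin N → Fin d) → ℝ) : Prop :=
  (∀ t, 0 ≤ t → (∀ x, 0 ≤ p t x) ∧ (∑ x, p t x) = 1) ∧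
  (∀ F : (Fin N → Fin d) → ℝ, ∀ t, 0 ≤ t →
    HasDerivAt (fun s => ∑ x, p s x * F x) (∑ x, p t x * genQ α F x) t)

/-- The linearized Kolmogorov operator `L_η`. -/
def linOp {d : ℕ} (α : (Fin d → ℝ) → Matrix (Fin d) (Fin d) ℝ)
    (δα : (Fin d → ℝ) → Fin d → Matrix (Fin d) (Fin d) ℝ)
    (η q : Fin d → ℝ) : Fin d → ℝ :=
  Matrix.vecMul η (∑ z, q z • δα η z) + Matrix.vecMul q (α η)

/-- The linearized ergodicity assumption (Lin-Erg) with constants `lam`, `c₂`. -/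
def LinErg {d : ℕ} (α : (Fin d → ℝ) → Matrix (Fin d) (Fin d) ℝ)
    (δα : (Fin d → ℝ) → Fin d → Matrix (Fin d) (Fin d) ℝ)
    (m : ℝ → (Fin d → ℝ) → Fin d → ℝ) (lam c₂ : ℝ) : Prop :=
  ∀ μ ∈ simplex d, ∀ q₀ : Fin d → ℝ, (∑ z, q₀ z) = 0 →
    ∀ r : ℝ → Fin d → ℝ, Measurable r → (∃ Cb : ℝ, ∀ t, 0 ≤ t → l1 (r t) ≤ Cb) →
      (∀ t, 0 ≤ t → (∑ z, r t z) = 0) →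
      ∀ q : ℝ → Fin d → ℝ, q 0 = q₀ →
        (∀ t, 0 ≤ t → HasDerivAt q (linOp α δα (m t μ) (q t) + r t) t) →
        ∀ t, 0 ≤ t →
          l1 (q t) ≤ c₂ * (Real.exp (-lam * t) * l1 q₀ +
            ∫ s in (0:ℝ)..t, Real.exp (-lam * (t - s)) * l1 (r s))

/-! ### The `ℓ¹` norm and the simplex -/

lemma l1_nonneg {d : ℕ} (v : Fin d → ℝ) : 0 ≤ l1 v :=
  Finset.sum_nonneg fun _ _ => abs_nonneg _

lemma l1_add_le {d : ℕ} (v w : Fin d → ℝ) : l1 (v + w) ≤ l1 v + l1 w := by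
  unfold l1
  rw [← Finset.sum_add_distrib]
  exact Finset.sum_le_sum fun z _ => abs_add_le _ _

lemma l1_smul {d : ℕ} (c : ℝ) (v : Fin d → ℝ) : l1 (c • v) = |c| * l1 v := by
  unfold l1
  simp [abs_mul, Finset.mul_sum]

lemma abs_sum_le_l1 {d : ℕ} (v : Fin d → ℝ) : |∑ z, v z| ≤ l1 v :=
  Finset.abs_sum_le_sum_abs _ _

lemma abs_apply_le_l1 {d : ℕ} (v : Fin d → ℝ) (z : Fin d) : |v z| ≤ l1 v :=
  Finset.single_le_sum (f := fun z => |v z|) (fun _ _ => abs_nonneg _) (Finset.mem_univ z)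

lemma l1_of_nonneg {d : ℕ} {v : Fin d → ℝ} (hv : ∀ z, 0 ≤ v z) : l1 v = ∑ z, v z :=
  Finset.sum_congr rfl fun z _ => abs_of_nonneg (hv z)

lemma l1_simplex {d : ℕ} {μ : Fin d → ℝ} (h : μ ∈ simplex d) : l1 μ = 1 := by
  rw [l1_of_nonneg h.1, h.2]

lemma sum_bvec {d : ℕ} (z : Fin d) : ∑ y, bvec z y = 1 := by
  simp [bvec]

lemma bvec_nonneg {d : ℕ} (z y : Fin d) : 0 ≤ bvec z y := by
  unfold bvec; split_ifs <;> norm_num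

lemma bvec_mem {d : ℕ} (z : Fin d) : bvec z ∈ simplex d :=
  ⟨bvec_nonneg z, sum_bvec z⟩

lemma mix_mem {d : ℕ} {μ : Fin d → ℝ} (h : μ ∈ simplex d) (z : Fin d) {ε : ℝ}
    (h0 : 0 ≤ ε) (h1 : ε ≤ 1) : (1 - ε) • μ + ε • bvec z ∈ simplex d := by
  refine ⟨fun y => ?_, ?_⟩
  · have := h.1 y
    have := bvec_nonneg z y
    simp only [Pi.add_apply, Pi.smul_apply, smul_eq_mul]
    have : 0 ≤ 1 - ε := by linarith
    positivity
  · simp only [Pi.add_apply, Pi.smul_apply, smul_eq_mul, Finset.sum_add_distrib,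
      ← Finset.mul_sum, h.2, sum_bvec]
    ring

lemma normalize_mem {d : ℕ} {v : Fin d → ℝ} (hv : ∀ z, 0 ≤ v z) (hS : 0 < ∑ z, v z) :
    (∑ z, v z)⁻¹ • v ∈ simplex d := by
  refine ⟨fun y => ?_, ?_⟩
  · have := hv y
    simp only [Pi.smul_apply, smul_eq_mul]
    positivity
  · simp only [Pi.smul_apply, smul_eq_mul, ← Finset.mul_sum]
    field_simp

/-- The bound on the linear functional derivative depends only on the Lipschitz constant of `F`;
this makes the estimates for `m t` uniform in `t`. -/
lemma lfderiv_bound {d : ℕ} {F : (Fin d → ℝ) → ℝ} {K : ℝ} (hK : 0 ≤ K)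
    (hF : ∀ μ ∈ simplex d, ∀ ν ∈ simplex d, |F μ - F ν| ≤ K * l1 (μ - ν))
    {μ : Fin d → ℝ} (hμ : μ ∈ simplex d) {z : Fin d} {v : ℝ} (h : HasLFDerivAt F μ z v) :
    |v| ≤ 2 * K := by
  refine le_of_tendsto h.abs ?_
  have hmem : Set.Ioo (0 : ℝ) 1 ∈ nhdsWithin (0 : ℝ) (Set.Ioi 0) :=
    Ioo_mem_nhdsGT one_pos
  filter_upwards [hmem] with ε hε
  have h1 := hF _ (mix_mem hμ z hε.1.le hε.2.le) _ hμ
  have h2 : (1 - ε) • μ + ε • bvec z - μ = ε • (bvec z + (-1 : ℝ) • μ) := by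
    ext y; simp; ring
  have h3 : l1 (bvec z + (-1 : ℝ) • μ) ≤ 2 := by
    refine (l1_add_le _ _).trans ?_
    rw [l1_smul, l1_simplex hμ, l1_simplex (bvec_mem z)]
    norm_num
  rw [h2, l1_smul, abs_of_pos hε.1] at h1
  rw [abs_div, abs_of_pos hε.1, div_le_iff₀ hε.1]
  refine h1.trans ?_
  have : K * (ε * l1 (bvec z + (-1 : ℝ) • μ)) ≤ K * (ε * 2) := by
    have := hε.1.le
    gcongr
  linarith

/-! ### Extension to the cone and Taylor expansion -/

/-- The extension of a function on the simplex to the cone of nonnegative vectors,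
constant along rays. -/
noncomputable def coneExt {d : ℕ} (F : (Fin d → ℝ) → ℝ) (v : Fin d → ℝ) : ℝ :=
  F ((∑ z, v z)⁻¹ • v)

lemma coneExt_simplex {d : ℕ} (F : (Fin d → ℝ) → ℝ) {μ : Fin d → ℝ} (h : μ ∈ simplex d) :
    coneExt F μ = F μ := by
  simp [coneExt, h.2]

lemma continuousOn_of_lip {d : ℕ} {F : (Fin d → ℝ) → ℝ} {K : ℝ}
    (hF : ∀ μ ∈ simplex d, ∀ ν ∈ simplex d, |F μ - F ν| ≤ K * l1 (μ - ν)) :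
    ContinuousOn F (simplex d) := by
  intro μ hμ
  rw [ContinuousWithinAt, tendsto_iff_dist_tendsto_zero]
  have hc : Continuous fun ν : Fin d → ℝ => K * l1 (ν - μ) := by
    unfold l1; fun_prop
  have ht : Tendsto (fun ν : Fin d → ℝ => K * l1 (ν - μ)) (𝓝[simplex d] μ) (𝓝 0) := by
    have := hc.tendsto μ
    simp only [sub_self, l1, Pi.zero_apply, abs_zero, Finset.sum_const_zero, mul_zero] at this
    exact tendsto_nhdsWithin_of_tendsto_nhds this
  refine squeeze_zero' (Eventually.of_forall fun _ => dist_nonneg) ?_ ht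
  filter_upwards [self_mem_nhdsWithin] with ν hν
  rw [Real.dist_eq]
  exact hF ν hν μ hμ

lemma sum_ray {d : ℕ} (v : Fin d → ℝ) (z : Fin d) (s : ℝ) :
    ∑ y, (v + s • bvec z) y = ∑ y, v y + s := by
  simp [Finset.sum_add_distrib, ← Finset.mul_sum, sum_bvec]

lemma ray_nonneg {d : ℕ} {v : Fin d → ℝ} (hv : ∀ y, 0 ≤ v y) (z : Fin d) {s : ℝ} (hs : 0 ≤ s)
    (y : Fin d) : 0 ≤ (v + s • bvec z) y := by
  have := hv y
  have := bvec_nonneg z y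
  simp only [Pi.add_apply, Pi.smul_apply, smul_eq_mul]
  positivity

/-- The right partial derivative of the extension is the linear functional derivative at the
normalized point, divided by the total mass. -/
lemma coneExt_deriv {d : ℕ} {F : (Fin d → ℝ) → ℝ} {δF : (Fin d → ℝ) → Fin d → ℝ}
    (hδ : ∀ μ ∈ simplex d, ∀ z, HasLFDerivAt F μ z (δF μ z))
    {v : Fin d → ℝ} (hv : ∀ y, 0 ≤ v y) (hS : 0 < ∑ y, v y) (z : Fin d) {s : ℝ} (hs : 0 ≤ s) :
    HasDerivWithinAt (fun r => coneExt F (v + r • bvec z))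
      (δF ((∑ y, v y + s)⁻¹ • (v + s • bvec z)) z * (∑ y, v y + s)⁻¹) (Set.Ici s) s := by
  set S := ∑ y, v y with hSdef
  set p := (S + s)⁻¹ • (v + s • bvec z) with hp
  have hp_mem : p ∈ simplex d := by
    have := normalize_mem (ray_nonneg hv z hs) (by rw [sum_ray]; linarith)
    rwa [sum_ray] at this
  have h1 : HasDerivWithinAt (fun ε : ℝ => F ((1 - ε) • p + ε • bvec z)) (δF p z)
      (Set.Ici 0) 0 := by
    rw [← hasDerivWithinAt_Ioi_iff_Ici, hasDerivWithinAt_iff_tendsto_slope' (by simp)]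
    refine (hδ p hp_mem z).congr fun ε => ?_
    simp [slope_def_field]
  -- Moving by `r - s` along `bvec z` and normalizing is a mixture with weight `(r - s) / (S + r)`.
  have h2 : HasDerivWithinAt (fun r : ℝ => (r - s) / (S + r)) (S + s)⁻¹ (Set.Ici s) s := by
    have hne : S + s ≠ 0 := by positivity
    have ha : HasDerivAt (fun r : ℝ => r - s) 1 s := (hasDerivAt_id s).sub_const s
    have hb : HasDerivAt (fun r : ℝ => S + r) 1 s := (hasDerivAt_id s).const_add S
    have := (ha.div hb hne).hasDerivWithinAt (s := Set.Ici s)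
    have hval : (1 * (S + s) - (s - s) * 1) / (S + s) ^ 2 = (S + s)⁻¹ := by
      field_simp
      ring
    rw [hval] at this
    exact this
  have h1' : HasDerivWithinAt (fun ε : ℝ => F ((1 - ε) • p + ε • bvec z)) (δF p z)
      (Set.Ici 0) ((s - s) / (S + s)) := by simpa using h1
  have h3 := h1'.comp s h2 (by
    intro r hr
    have : s ≤ r := hr
    simp only [Set.mem_Ici]
    exact div_nonneg (by linarith) (by linarith))
  have key : ∀ r ∈ Set.Ici s, coneExt F (v + r • bvec z) =
      ((fun ε : ℝ => F ((1 - ε) • p + ε • bvec z)) ∘ fun r : ℝ => (r - s) / (S + r)) r := by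
    intro r hr
    have hr' : s ≤ r := hr
    have hne : S + s ≠ 0 := by positivity
    have hne' : S + r ≠ 0 := by have : 0 < S + r := by linarith
                                exact this.ne'
    simp only [coneExt, Function.comp, sum_ray]
    congr 1
    ext y
    simp only [hp, ← hSdef, Pi.add_apply, Pi.smul_apply, smul_eq_mul]
    field_simp
    ring
  exact h3.congr key (key s Set.self_mem_Ici)

/-- The gradient of the extension at `v` differs from the gradient at a point `a` of the simplex
by at most a multiple of `|v - a|`. -/
lemma cone_grad_lip {d : ℕ} {δF : (Fin d → ℝ) → Fin d → ℝ} {K K' : ℝ} (hK' : 0 ≤ K')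
    (hB : ∀ μ ∈ simplex d, ∀ z, |δF μ z| ≤ 2 * K)
    (hL : ∀ μ ∈ simplex d, ∀ ν ∈ simplex d, ∀ z, |δF μ z - δF ν z| ≤ K' * l1 (μ - ν))
    {a v : Fin d → ℝ} (ha : a ∈ simplex d) (hv : ∀ y, 0 ≤ v y) (hS : 1 ≤ ∑ y, v y) (z : Fin d) :
    |δF ((∑ y, v y)⁻¹ • v) z * (∑ y, v y)⁻¹ - δF a z| ≤ (2 * K' + 2 * K) * l1 (v - a) := by
  set S := ∑ y, v y with hSdef
  have hSpos : 0 < S := by linarith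
  set p := S⁻¹ • v with hp
  have hpm : p ∈ simplex d := normalize_mem hv hSpos
  have hSi : S⁻¹ ≤ 1 := inv_le_one_of_one_le₀ hS
  have hSi0 : 0 < S⁻¹ := by positivity
  have hSl : S - 1 ≤ l1 (v - a) := by
    have := (le_abs_self _).trans (abs_sum_le_l1 (v - a))
    simpa [ha.2, ← hSdef] using this
  have h1i : 1 - S⁻¹ ≤ S - 1 := by
    have : S⁻¹ * S = 1 := inv_mul_cancel₀ hSpos.ne'
    nlinarith [mul_nonneg (sub_nonneg.2 hS) (sub_nonneg.2 hSi)]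
  have hpa : l1 (p - a) ≤ 2 * l1 (v - a) := by
    have e : p - a = (v - a) + (-(1 - S⁻¹)) • v := by ext y; simp [hp]; ring
    rw [e]
    refine (l1_add_le _ _).trans ?_
    rw [l1_smul, l1_of_nonneg hv, ← hSdef, abs_neg, abs_of_nonneg (by linarith)]
    have : (1 - S⁻¹) * S = S - 1 := by field_simp
    linarith
  have e : δF p z * S⁻¹ - δF a z = (δF p z - δF a z) * S⁻¹ + -(δF a z * (1 - S⁻¹)) := by ring
  rw [e]
  refine (abs_add_le _ _).trans ?_
  rw [abs_neg, abs_mul, abs_mul, abs_of_pos hSi0, abs_of_nonneg (by linarith : 0 ≤ 1 - S⁻¹)]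
  have t1 : |δF p z - δF a z| * S⁻¹ ≤ (K' * (2 * l1 (v - a))) * 1 := by
    have := hL p hpm a ha z
    have h0 := l1_nonneg (v - a)
    have : |δF p z - δF a z| ≤ K' * (2 * l1 (v - a)) := this.trans (by gcongr)
    gcongr
  have hK : 0 ≤ 2 * K := (abs_nonneg _).trans (hB a ha z)
  have t2 : |δF a z| * (1 - S⁻¹) ≤ 2 * K * l1 (v - a) :=
    mul_le_mul (hB a ha z) (by linarith) (by linarith) hK
  linarith

lemma cone_step {d : ℕ} {F : (Fin d → ℝ) → ℝ} {δF : (Fin d → ℝ) → Fin d → ℝ} {K K' : ℝ}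
    (hK : 0 ≤ K) (hK' : 0 ≤ K')
    (hF : ∀ μ ∈ simplex d, ∀ ν ∈ simplex d, |F μ - F ν| ≤ K * l1 (μ - ν))
    (hδ : ∀ μ ∈ simplex d, ∀ z, HasLFDerivAt F μ z (δF μ z))
    (hL : ∀ μ ∈ simplex d, ∀ ν ∈ simplex d, ∀ z, |δF μ z - δF ν z| ≤ K' * l1 (μ - ν))
    {a v : Fin d → ℝ} (ha : a ∈ simplex d) (hv : ∀ y, 0 ≤ v y) (hS : 1 ≤ ∑ y, v y) (z : Fin d)
    {s : ℝ} (hs : 0 ≤ s) :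
    |coneExt F (v + s • bvec z) - coneExt F v - s * δF a z| ≤
      (2 * K' + 2 * K) * (l1 (v - a) + s) * s := by
  have hSpos : 0 < ∑ y, v y := by linarith
  have hB : ∀ μ ∈ simplex d, ∀ z, |δF μ z| ≤ 2 * K := fun μ hμ z =>
    lfderiv_bound hK hF hμ (hδ μ hμ z)
  have hder : ∀ r ∈ Set.Ico 0 s, HasDerivWithinAt
      (fun r => coneExt F (v + r • bvec z) - r * δF a z)
      (δF ((∑ y, v y + r)⁻¹ • (v + r • bvec z)) z * (∑ y, v y + r)⁻¹ - δF a z)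
      (Set.Ici r) r := by
    intro r hr
    refine (coneExt_deriv hδ hv hSpos z hr.1).sub ?_
    simpa using ((hasDerivAt_id r).mul_const (δF a z)).hasDerivWithinAt
  have hcont : ContinuousOn (fun r : ℝ => coneExt F (v + r • bvec z) - r * δF a z)
      (Set.Icc 0 s) := by
    refine ContinuousOn.sub ?_ (by fun_prop)
    unfold coneExt
    refine (continuousOn_of_lip hF).comp (t := simplex d)
      (f := fun r : ℝ => (∑ y, (v + r • bvec z) y)⁻¹ • (v + r • bvec z)) ?_ ?_
    · refine ContinuousOn.smul (f := fun r : ℝ => (∑ y, (v + r • bvec z) y)⁻¹)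
        (g := fun r : ℝ => v + r • bvec z) (ContinuousOn.inv₀ ?_ ?_) (by fun_prop)
      · simp only [sum_ray]; fun_prop
      · intro r hr
        rw [sum_ray]
        linarith [hr.1]
    · intro r hr
      exact normalize_mem (ray_nonneg hv z hr.1) (by rw [sum_ray]; linarith [hr.1])
  have hbd : ∀ r ∈ Set.Ico 0 s,
      ‖δF ((∑ y, v y + r)⁻¹ • (v + r • bvec z)) z * (∑ y, v y + r)⁻¹ - δF a z‖ ≤
        (2 * K' + 2 * K) * (l1 (v - a) + s) := by
    intro r hr
    have h := cone_grad_lip hK' hB hL ha (ray_nonneg hv z hr.1)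
      (by rw [sum_ray]; linarith [hr.1]) z
    rw [sum_ray] at h
    rw [Real.norm_eq_abs]
    refine h.trans ?_
    gcongr
    have e : v + r • bvec z - a = (v - a) + r • bvec z := by ext y; simp; ring
    rw [e]
    refine (l1_add_le _ _).trans ?_
    rw [l1_smul, l1_simplex (bvec_mem z), abs_of_nonneg hr.1]
    linarith [hr.2]
  have := norm_image_sub_le_of_norm_deriv_right_le_segment hcont hder hbd s
    (Set.right_mem_Icc.2 hs)
  simp only [zero_smul, add_zero, zero_mul, sub_zero, Real.norm_eq_abs] at this
  convert this using 2
  ring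

/-- First-order expansion of the extension along nonnegative increments, obtained by changing one
coordinate at a time. -/
lemma cone_incr {d : ℕ} {F : (Fin d → ℝ) → ℝ} {δF : (Fin d → ℝ) → Fin d → ℝ} {K K' : ℝ}
    (hK : 0 ≤ K) (hK' : 0 ≤ K')
    (hF : ∀ μ ∈ simplex d, ∀ ν ∈ simplex d, |F μ - F ν| ≤ K * l1 (μ - ν))
    (hδ : ∀ μ ∈ simplex d, ∀ z, HasLFDerivAt F μ z (δF μ z))
    (hL : ∀ μ ∈ simplex d, ∀ ν ∈ simplex d, ∀ z, |δF μ z - δF ν z| ≤ K' * l1 (μ - ν))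
    {a v h : Fin d → ℝ} (ha : a ∈ simplex d) (hv : ∀ y, 0 ≤ v y) (hS : 1 ≤ ∑ y, v y)
    (hh : ∀ y, 0 ≤ h y) :
    |coneExt F (v + h) - coneExt F v - ∑ z, h z * δF a z| ≤
      (2 * K' + 2 * K) * (l1 (v - a) + l1 h) * l1 h := by
  have main : ∀ s : Finset (Fin d),
      |coneExt F (v + ∑ z ∈ s, h z • bvec z) - coneExt F v - ∑ z ∈ s, h z * δF a z| ≤
        (2 * K' + 2 * K) * (l1 (v - a) + l1 h) * ∑ z ∈ s, h z := by
    intro s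
    induction s using Finset.induction_on with
    | empty => simp
    | insert z s hz ih =>
      rw [Finset.sum_insert hz, Finset.sum_insert hz, Finset.sum_insert hz]
      set g := ∑ y ∈ s, h y • bvec y with hg
      have hgn : ∀ y, 0 ≤ g y := by
        intro y
        rw [hg, Finset.sum_apply]
        exact Finset.sum_nonneg fun i _ => mul_nonneg (hh i) (bvec_nonneg i y)
      have hgs : ∑ y, g y = ∑ y ∈ s, h y := by
        simp only [hg, Finset.sum_apply]
        rw [Finset.sum_comm]
        simp [← Finset.mul_sum, sum_bvec]
      have hst := cone_step hK hK' hF hδ hL ha (v := v + g)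
        (fun y => add_nonneg (hv y) (hgn y))
        (by
          have := Finset.sum_nonneg (s := Finset.univ) fun y _ => hgn y
          simp only [Pi.add_apply, Finset.sum_add_distrib]
          linarith) z (hh z)
      have hle : l1 (v + g - a) + h z ≤ l1 (v - a) + l1 h := by
        have e : v + g - a = (v - a) + g := by ext y; simp; ring
        have h1 := l1_add_le (v - a) g
        rw [← e, l1_of_nonneg hgn, hgs] at h1
        have h2 : h z + ∑ y ∈ s, h y ≤ l1 h := by
          rw [← Finset.sum_insert hz, l1_of_nonneg hh]
          exact Finset.sum_le_sum_of_subset_of_nonneg (Finset.subset_univ _) fun i _ _ => hh i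
        linarith
      have hst' := hst.trans (b := _) (c := (2 * K' + 2 * K) * (l1 (v - a) + l1 h) * h z) (by
        have := hh z
        gcongr)
      have e : v + (h z • bvec z + g) = v + g + h z • bvec z := by ext y; simp; ring
      rw [e]
      have e2 : coneExt F (v + g + h z • bvec z) - coneExt F v -
          (h z * δF a z + ∑ y ∈ s, h y * δF a y) =
          (coneExt F (v + g + h z • bvec z) - coneExt F (v + g) - h z * δF a z) +
          (coneExt F (v + g) - coneExt F v - ∑ y ∈ s, h y * δF a y) := by ring
      rw [e2, mul_add]
      exact (abs_add_le _ _).trans (add_le_add hst' ih)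
  have e : ∑ z, h z • bvec z = h := by
    ext y
    simp [Finset.sum_apply, bvec]
  have := main Finset.univ
  rwa [e, ← l1_of_nonneg hh] at this

/-- First-order Taylor expansion on the simplex with quadratic remainder. -/
lemma taylor_simplex {d : ℕ} {F : (Fin d → ℝ) → ℝ} {δF : (Fin d → ℝ) → Fin d → ℝ} {K K' : ℝ}
    (hK : 0 ≤ K) (hK' : 0 ≤ K')
    (hF : ∀ μ ∈ simplex d, ∀ ν ∈ simplex d, |F μ - F ν| ≤ K * l1 (μ - ν))
    (hδ : ∀ μ ∈ simplex d, ∀ z, HasLFDerivAt F μ z (δF μ z))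
    (hL : ∀ μ ∈ simplex d, ∀ ν ∈ simplex d, ∀ z, |δF μ z - δF ν z| ≤ K' * l1 (μ - ν))
    {μ ν : Fin d → ℝ} (hμ : μ ∈ simplex d) (hν : ν ∈ simplex d) :
    |F ν - F μ - ∑ z, (ν z - μ z) * δF μ z| ≤ 6 * (K + K') * l1 (ν - μ) ^ 2 := by
  -- `p` and `q` are the upward increments leading from `μ` and from `ν` to `max μ ν`.
  set p : Fin d → ℝ := fun z => max (μ z) (ν z) - μ z with hp
  set q : Fin d → ℝ := fun z => max (μ z) (ν z) - ν z with hq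
  have hp0 : ∀ z, 0 ≤ p z := fun z => sub_nonneg.2 (le_max_left _ _)
  have hq0 : ∀ z, 0 ≤ q z := fun z => sub_nonneg.2 (le_max_right _ _)
  have hpl : l1 p ≤ l1 (ν - μ) := by
    refine Finset.sum_le_sum fun z _ => ?_
    rw [abs_of_nonneg (hp0 z)]
    simp only [hp, Pi.sub_apply]
    rcases max_cases (μ z) (ν z) with h | h <;> rw [h.1]
    · simp
    · exact le_abs_self _
  have hql : l1 q ≤ l1 (ν - μ) := by
    refine Finset.sum_le_sum fun z _ => ?_
    rw [abs_of_nonneg (hq0 z)]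
    simp only [hq, Pi.sub_apply]
    rcases max_cases (μ z) (ν z) with h | h <;> rw [h.1]
    · rw [abs_sub_comm]; exact le_abs_self _
    · simp
  have h1 := cone_incr hK hK' hF hδ hL hμ hμ.1 hμ.2.ge hp0
  have h2 := cone_incr hK hK' hF hδ hL hμ hν.1 hν.2.ge hq0
  have e : ν + q = μ + p := by ext z; simp [hp, hq]
  rw [e] at h2
  rw [coneExt_simplex F hμ] at h1
  rw [coneExt_simplex F hν] at h2
  have e3 : ∑ z, (ν z - μ z) * δF μ z = ∑ z, p z * δF μ z - ∑ z, q z * δF μ z := by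
    rw [← Finset.sum_sub_distrib]
    exact Finset.sum_congr rfl fun z _ => by simp only [hp, hq]; ring
  rw [e3]
  have e4 : F ν - F μ - (∑ z, p z * δF μ z - ∑ z, q z * δF μ z) =
      (coneExt F (μ + p) - F μ - ∑ z, p z * δF μ z) -
      (coneExt F (μ + p) - F ν - ∑ z, q z * δF μ z) := by ring
  rw [e4]
  refine (abs_sub _ _).trans ?_
  have h0 : l1 (μ - μ) = 0 := by simp [l1]
  rw [h0, zero_add] at h1
  have n1 := l1_nonneg p
  have n2 := l1_nonneg q
  have n3 := l1_nonneg (ν - μ)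
  have b1 : (2 * K' + 2 * K) * l1 p * l1 p ≤
      (2 * K' + 2 * K) * l1 (ν - μ) * l1 (ν - μ) := by gcongr
  have b2 : (2 * K' + 2 * K) * (l1 (ν - μ) + l1 q) * l1 q ≤
      (2 * K' + 2 * K) * (l1 (ν - μ) + l1 (ν - μ)) * l1 (ν - μ) := by gcongr
  nlinarith [h1, h2, b1, b2]

/-! ### Moments of the empirical measure -/

lemma sum_prod_law {d N : ℕ} {μ : Fin d → ℝ} (hμ : μ ∈ simplex d) :
    ∑ x : Fin N → Fin d, ∏ i, μ (x i) = 1 := by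
  have := Finset.prod_univ_sum (fun _ : Fin N => (Finset.univ : Finset (Fin d))) fun _ y => μ y
  simp only [hμ.2, Finset.prod_const_one, Fintype.piFinset_univ] at this
  exact this.symm

lemma expect_single {d N : ℕ} {μ : Fin d → ℝ} (f : Fin d → ℝ)
    (hf : ∑ y, μ y * f y = 0) (i : Fin N) :
    ∑ x : Fin N → Fin d, (∏ k, μ (x k)) * f (x i) = 0 := by
  have := Finset.prod_univ_sum (fun _ : Fin N => (Finset.univ : Finset (Fin d)))
    fun k y => μ y * (if k = i then f y else 1)
  simp only [Fintype.piFinset_univ, Finset.prod_mul_distrib, Finset.prod_ite_eq',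
    Finset.mem_univ, if_true] at this
  rw [← this]
  exact Finset.prod_eq_zero (Finset.mem_univ i) (by simpa using hf)

lemma expect_pair {d N : ℕ} {μ : Fin d → ℝ} (f : Fin d → ℝ)
    (hf : ∑ y, μ y * f y = 0) {i j : Fin N} (hij : i ≠ j) :
    ∑ x : Fin N → Fin d, (∏ k, μ (x k)) * (f (x i) * f (x j)) = 0 := by
  have := Finset.prod_univ_sum (fun _ : Fin N => (Finset.univ : Finset (Fin d)))
    fun k y => μ y * ((if k = i then f y else 1) * (if k = j then f y else 1))
  simp only [Fintype.piFinset_univ, Finset.prod_mul_distrib, Finset.prod_ite_eq',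
    Finset.mem_univ, if_true] at this
  rw [← this]
  exact Finset.prod_eq_zero (Finset.mem_univ i) (by simpa [hij] using hf)

lemma empMeas_mem {d N : ℕ} (hN : 1 ≤ N) (x : Fin N → Fin d) : empMeas x ∈ simplex d := by
  have hN' : (N : ℝ) ≠ 0 := by positivity
  refine ⟨fun z => ?_, ?_⟩
  · unfold empMeas
    refine div_nonneg (Finset.sum_nonneg fun i _ => ?_) (by positivity)
    split_ifs <;> norm_num
  · unfold empMeas
    rw [← Finset.sum_div, Finset.sum_comm]
    simp [hN']

lemma empMeas_sub {d N : ℕ} (hN : 1 ≤ N) (x : Fin N → Fin d) (μ : Fin d → ℝ) (z : Fin d) :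
    empMeas x z - μ z = (∑ i, ((if x i = z then (1 : ℝ) else 0) - μ z)) / N := by
  have hN' : (N : ℝ) ≠ 0 := by positivity
  rw [Finset.sum_sub_distrib]
  simp only [empMeas, Finset.sum_const, Finset.card_univ, Fintype.card_fin, nsmul_eq_mul]
  field_simp

lemma ind_centered {d : ℕ} {μ : Fin d → ℝ} (hμ : μ ∈ simplex d) (z : Fin d) :
    ∑ y, μ y * ((if y = z then (1 : ℝ) else 0) - μ z) = 0 := by
  simp [mul_sub, Finset.sum_sub_distrib, ← Finset.sum_mul, hμ.2]

lemma expect_linear {d N : ℕ} (hN : 1 ≤ N) {μ : Fin d → ℝ} (hμ : μ ∈ simplex d) (z : Fin d) :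
    ∑ x : Fin N → Fin d, (∏ k, μ (x k)) * (empMeas x z - μ z) = 0 := by
  simp only [empMeas_sub hN, mul_div_assoc', Finset.mul_sum]
  rw [← Finset.sum_div, Finset.sum_comm]
  rw [Finset.sum_eq_zero fun i _ => expect_single
    (fun y => (if y = z then (1 : ℝ) else 0) - μ z) (ind_centered hμ z) i]
  simp

lemma expect_sq {d N : ℕ} (hN : 1 ≤ N) {μ : Fin d → ℝ} (hμ : μ ∈ simplex d) (z : Fin d) :
    ∑ x : Fin N → Fin d, (∏ k, μ (x k)) * (empMeas x z - μ z) ^ 2 ≤ 1 / N := by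
  have hN' : (0 : ℝ) < N := by positivity
  set f : Fin d → ℝ := fun y => (if y = z then (1 : ℝ) else 0) - μ z with hf
  have hz1 : μ z ≤ 1 := by
    rw [← hμ.2]
    exact Finset.single_le_sum (fun i _ => hμ.1 i) (Finset.mem_univ z)
  have hf1 : ∀ y, f y * f y ≤ 1 := by
    intro y
    have := hμ.1 z
    simp only [hf]
    split_ifs <;> nlinarith
  have e : ∀ x : Fin N → Fin d, (∏ k, μ (x k)) * (empMeas x z - μ z) ^ 2 =
      (∑ i, ∑ j, (∏ k, μ (x k)) * (f (x i) * f (x j))) / N ^ 2 := by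
    intro x
    rw [empMeas_sub hN, div_pow, mul_div_assoc']
    congr 1
    rw [sq, Finset.sum_mul_sum, Finset.mul_sum]
    exact Finset.sum_congr rfl fun i _ => by rw [Finset.mul_sum]
  simp only [e]
  rw [← Finset.sum_div, Finset.sum_comm]
  have hi : ∀ i : Fin N, ∑ x : Fin N → Fin d, ∑ j, (∏ k, μ (x k)) * (f (x i) * f (x j)) ≤ 1 := by
    intro i
    rw [Finset.sum_comm, Finset.sum_eq_single i
      (fun j _ hj => expect_pair f (ind_centered hμ z) hj.symm) (by simp)]
    rw [← sum_prod_law (N := N) hμ]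
    refine Finset.sum_le_sum fun x _ => ?_
    exact mul_le_of_le_one_right (Finset.prod_nonneg fun k _ => hμ.1 _) (hf1 _)
  have hs := Finset.sum_le_sum fun i (_ : i ∈ Finset.univ) => hi i
  simp only [Finset.sum_const, Finset.card_univ, Fintype.card_fin, nsmul_eq_mul, mul_one] at hs
  rw [div_le_div_iff₀ (by positivity) hN']
  nlinarith

lemma expect_l1_sq {d N : ℕ} (hN : 1 ≤ N) {μ : Fin d → ℝ} (hμ : μ ∈ simplex d) :
    ∑ x : Fin N → Fin d, (∏ k, μ (x k)) * l1 (empMeas x - μ) ^ 2 ≤ d ^ 2 / N := by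
  have h1 : ∀ x : Fin N → Fin d, (∏ k, μ (x k)) * l1 (empMeas x - μ) ^ 2 ≤
      d * ∑ z, (∏ k, μ (x k)) * (empMeas x z - μ z) ^ 2 := by
    intro x
    have hcs := sq_sum_le_card_mul_sum_sq (s := Finset.univ)
      (f := fun z => |(empMeas x - μ) z|)
    simp only [sq_abs, Finset.card_univ, Fintype.card_fin, Pi.sub_apply] at hcs
    rw [← Finset.mul_sum, mul_left_comm]
    refine mul_le_mul_of_nonneg_left ?_ (Finset.prod_nonneg fun k _ => hμ.1 _)
    simpa [l1] using hcs
  refine (Finset.sum_le_sum fun x _ => h1 x).trans ?_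
  rw [← Finset.mul_sum, Finset.sum_comm]
  have h2 := Finset.sum_le_sum fun z (_ : z ∈ Finset.univ) => expect_sq hN hμ z
  simp only [Finset.sum_const, Finset.card_univ, Fintype.card_fin, nsmul_eq_mul] at h2
  refine (mul_le_mul_of_nonneg_left h2 (by positivity)).trans (le_of_eq ?_)
  ring

/-- A function with a first-order expansion at `μ` and quadratic remainder has sampling
error of order `1 / N`. -/
lemma expect_bound {d N : ℕ} (hN : 1 ≤ N) {μ : Fin d → ℝ} (hμ : μ ∈ simplex d)
    {G : (Fin d → ℝ) → ℝ} {A : ℝ} (hA : 0 ≤ A) (L : Fin d → ℝ)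
    (hG : ∀ ν ∈ simplex d, |G ν - G μ - ∑ z, (ν z - μ z) * L z| ≤ A * l1 (ν - μ) ^ 2) :
    |(∑ x : Fin N → Fin d, (∏ i, μ (x i)) * G (empMeas x)) - G μ| ≤ A * d ^ 2 / N := by
  have hlin : ∑ x : Fin N → Fin d, (∏ i, μ (x i)) * ∑ z, (empMeas x z - μ z) * L z = 0 := by
    simp only [Finset.mul_sum]
    rw [Finset.sum_comm]
    refine Finset.sum_eq_zero fun z _ => ?_
    simp only [← mul_assoc]
    rw [← Finset.sum_mul, expect_linear hN hμ z, zero_mul]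
  have e : (∑ x : Fin N → Fin d, (∏ i, μ (x i)) * G (empMeas x)) - G μ =
      ∑ x : Fin N → Fin d, (∏ i, μ (x i)) *
        (G (empMeas x) - G μ - ∑ z, (empMeas x z - μ z) * L z) := by
    have e' : ∀ x : Fin N → Fin d, (∏ i, μ (x i)) *
        (G (empMeas x) - G μ - ∑ z, (empMeas x z - μ z) * L z) =
        (∏ i, μ (x i)) * G (empMeas x) - (∏ i, μ (x i)) * G μ -
          (∏ i, μ (x i)) * ∑ z, (empMeas x z - μ z) * L z := fun x => by ring
    simp only [e']
    rw [Finset.sum_sub_distrib, Finset.sum_sub_distrib, hlin, ← Finset.sum_mul, sum_prod_law hμ]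
    ring
  rw [e]
  refine (Finset.abs_sum_le_sum_abs _ _).trans ?_
  have hp : ∀ x : Fin N → Fin d, 0 ≤ ∏ i, μ (x i) := fun x =>
    Finset.prod_nonneg fun k _ => hμ.1 _
  calc _ ≤ ∑ x : Fin N → Fin d, A * ((∏ i, μ (x i)) * l1 (empMeas x - μ) ^ 2) := by
        refine Finset.sum_le_sum fun x _ => ?_
        rw [abs_mul, abs_of_nonneg (hp x), mul_left_comm]
        exact mul_le_mul_of_nonneg_left (hG _ (empMeas_mem hN x)) (hp x)
    _ ≤ A * (d ^ 2 / N) := by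
        rw [← Finset.mul_sum]
        exact mul_le_mul_of_nonneg_left (expect_l1_sq hN hμ) hA
    _ = _ := by ring

/-! ### Conclusion -/

/-- The sampling error term: with `U(t,μ) := Φ(m(t;μ))` and `μ₀^N` the empirical
measure of `N` i.i.d. samples `ξ₁,…,ξ_N ∼ μ₀` (expectation w.r.t. the product law `μ₀^{⊗N}`),
`|E[U(t, μ₀^N)] - U(t, μ₀)| ≤ C/N` uniformly in `t`, `N` and `μ₀`. -/
theorem second_term_bound {d : ℕ} (hd : 1 < d)
    (α : (Fin d → ℝ) → Matrix (Fin d) (Fin d) ℝ)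
    (δα : (Fin d → ℝ) → Fin d → Matrix (Fin d) (Fin d) ℝ)
    (m : ℝ → (Fin d → ℝ) → Fin d → ℝ)
    (δm : ℝ → (Fin d → ℝ) → Fin d → Fin d → ℝ)
    (lam c₁ k₁ : ℝ)
    (hα : IsRate d α) (hαD : DLipRate α δα)
    (hm : IsFlow α m) (hErg : Erg m δm lam c₁ k₁)
    (Φ : (Fin d → ℝ) → ℝ) (δΦ : (Fin d → ℝ) → Fin d → ℝ) (hΦ : DLipR Φ δΦ) :
    ∃ C : ℝ, ∀ μ₀ ∈ simplex d, ∀ N : ℕ, 1 ≤ N → ∀ t : ℝ, 0 ≤ t →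
      |(∑ x : Fin N → Fin d, (∏ i, μ₀ (x i)) * Φ (m t (empMeas x))) - Φ (m t μ₀)| ≤ C / N := by
  obtain ⟨hlam, hc₁, hk₁, hLip, hδm, hδmL⟩ := hErg
  obtain ⟨⟨K, hK⟩, hδΦ, ⟨K', hK'⟩⟩ := hΦ
  have hΦ1 : ∀ μ ∈ simplex d, ∀ ν ∈ simplex d, |Φ μ - Φ ν| ≤ |K| * l1 (μ - ν) :=
    fun μ hμ ν hν => (hK μ hμ ν hν).trans
      (mul_le_mul_of_nonneg_right (le_abs_self K) (l1_nonneg _))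
  have hΦ2 : ∀ μ ∈ simplex d, ∀ ν ∈ simplex d, ∀ z, |δΦ μ z - δΦ ν z| ≤ |K'| * l1 (μ - ν) :=
    fun μ hμ ν hν z => (abs_apply_le_l1 (δΦ μ - δΦ ν) z).trans <| (hK' μ hμ ν hν).trans
      (mul_le_mul_of_nonneg_right (le_abs_self K') (l1_nonneg _))
  -- The first summand is the remainder constant of `Φ`, transported by the Lipschitz bound on `m t`; the second
  -- summand collects the remainders of the `d` coordinates of `m t`, weighted by `|δΦ| ≤ 2 |K|`.
  set A : ℝ := 6 * (|K| + |K'|) * c₁ ^ 2 + d * (2 * |K| * (6 * (c₁ + k₁))) with hA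
  have hA0 : 0 ≤ A := by positivity
  refine ⟨A * d ^ 2, fun μ hμ N hN t ht => ?_⟩
  have hmem : ∀ ν ∈ simplex d, m t ν ∈ simplex d := fun ν hν => (hm ν hν).2.1 t ht
  have hm1 : ∀ μ ∈ simplex d, ∀ ν ∈ simplex d, l1 (m t μ - m t ν) ≤ c₁ * l1 (μ - ν) := by
    intro μ hμ ν hν
    refine (hLip t ht μ hμ ν hν).trans (mul_le_mul_of_nonneg_right ?_ (l1_nonneg _))
    refine mul_le_of_le_one_right hc₁.le (Real.exp_le_one_iff.2 ?_)
    nlinarith [mul_nonneg hlam.le ht]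
  refine expect_bound hN hμ (G := fun ν => Φ (m t ν)) hA0
    (fun z => ∑ x, δm t μ z x * δΦ (m t μ) x) fun ν hν => ?_
  have T1 := taylor_simplex (abs_nonneg K) (abs_nonneg K') hΦ1 hδΦ hΦ2 (hmem μ hμ) (hmem ν hν)
  have T2 : ∀ x, |m t ν x - m t μ x - ∑ z, (ν z - μ z) * δm t μ z x| ≤
      6 * (c₁ + k₁) * l1 (ν - μ) ^ 2 := fun x =>
    taylor_simplex (F := fun ν => m t ν x) (δF := fun μ z => δm t μ z x) hc₁.le hk₁.le
      (fun μ hμ ν hν => (abs_apply_le_l1 (m t μ - m t ν) x).trans (hm1 μ hμ ν hν))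
      (fun μ hμ z => hδm t ht μ hμ z x)
      (fun μ hμ ν hν z => (abs_apply_le_l1 (δm t μ z - δm t ν z) x).trans
        (hδmL t ht μ hμ ν hν z)) hμ hν
  have hB : ∀ x, |δΦ (m t μ) x| ≤ 2 * |K| := fun x =>
    lfderiv_bound (abs_nonneg K) hΦ1 (hmem μ hμ) (hδΦ _ (hmem μ hμ) x)
  have esum : ∑ z, (ν z - μ z) * ∑ x, δm t μ z x * δΦ (m t μ) x =
      ∑ x, (∑ z, (ν z - μ z) * δm t μ z x) * δΦ (m t μ) x := by
    simp only [Finset.mul_sum, Finset.sum_mul]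
    rw [Finset.sum_comm]
    exact Finset.sum_congr rfl fun x _ => Finset.sum_congr rfl fun z _ => by ring
  have e : Φ (m t ν) - Φ (m t μ) - ∑ z, (ν z - μ z) * ∑ x, δm t μ z x * δΦ (m t μ) x =
      (Φ (m t ν) - Φ (m t μ) - ∑ x, (m t ν x - m t μ x) * δΦ (m t μ) x) +
      ∑ x, (m t ν x - m t μ x - ∑ z, (ν z - μ z) * δm t μ z x) * δΦ (m t μ) x := by
    rw [esum]
    simp only [sub_mul, Finset.sum_sub_distrib]
    ring
  show |Φ (m t ν) - Φ (m t μ) - ∑ z, (ν z - μ z) * ∑ x, δm t μ z x * δΦ (m t μ) x| ≤ _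
  rw [e]
  refine (abs_add_le _ _).trans ?_
  have hsq : l1 (m t ν - m t μ) ^ 2 ≤ (c₁ * l1 (ν - μ)) ^ 2 :=
    pow_le_pow_left₀ (l1_nonneg _) (hm1 ν hν μ hμ) 2
  have b1 : 6 * (|K| + |K'|) * l1 (m t ν - m t μ) ^ 2 ≤
      6 * (|K| + |K'|) * (c₁ * l1 (ν - μ)) ^ 2 := by gcongr
  have b2 : |∑ x, (m t ν x - m t μ x - ∑ z, (ν z - μ z) * δm t μ z x) * δΦ (m t μ) x| ≤
      d * (6 * (c₁ + k₁) * l1 (ν - μ) ^ 2 * (2 * |K|)) := by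
    refine (Finset.abs_sum_le_sum_abs _ _).trans ?_
    have : ∀ x ∈ (Finset.univ : Finset (Fin d)),
        |(m t ν x - m t μ x - ∑ z, (ν z - μ z) * δm t μ z x) * δΦ (m t μ) x| ≤
        6 * (c₁ + k₁) * l1 (ν - μ) ^ 2 * (2 * |K|) := by
      intro x _
      rw [abs_mul]
      exact mul_le_mul (T2 x) (hB x) (abs_nonneg _) (by positivity)
    refine (Finset.sum_le_sum this).trans (le_of_eq ?_)
    simp
  refine (add_le_add (T1.trans b1) b2).trans (le_of_eq ?_)
  rw [hA]
  ring
end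

section
/- Let α be a transition rate function on [d] in (D-Lip) and fix T > 0. For μ, ν ∈ S_d let m^{(1)}(t, μ, ν) be the solution of the linearized Kolmogorov Cauchy problem q'(t) = L_{m(t;μ)} q(t), q(0) = ν − μ. Then there exists a constant C₂(T), depending on T but independent of t, μ and μ̂, such that for all μ, μ̂ ∈ S_d and all t ∈ [0,T], |m(t; μ̂) − m(t; μ) − m^{(1)}(t, μ, μ̂)| ≤ C₂(T) |μ̂ − μ|². -/
/-!
The proof is a Taylor expansion of the Kolmogorov vector field followed by Grönwall's inequality.

The linear functional derivative only provides one-sided derivatives of `α` towards the vertices of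
the simplex. On the segment from `μ` to a vertex this gives a right derivative that is Lipschitz
along the segment, hence a quadratic remainder (`ScalarBounds.bvec_mem_good`). Two consecutive small
moves agree to second order with one move towards a convex combination, so the directions with a
quadratic remainder form a convex set (`ScalarBounds.convex_good`), which is therefore the whole
simplex. Thus `δα` computes every directional derivative of `α`; in particular it is centered,
`∑ z, μ z * δα(μ, z) = 0` (`ScalarBounds.sum_self`). Integrating along segments yields
`|α(ν) - α(μ) - ∑ z, (ν - μ) z * δα(μ, z)| ≤ C |ν - μ|²` with a uniform constant
(`ScalarBounds.taylor`).

Consequently `X α(X) - Y α(Y) = L_Y (X - Y) + O(|X - Y|²)` (`norm_field_taylor_le`). Applied to the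
flows started at `μ'` and `μ`, the error `m(t; μ') - m(t; μ) - m1(t)` solves the linearized equation
with zero initial value and a source of size `O(|m(t; μ') - m(t; μ)|²)`, which is `O(|μ' - μ|²)` by a
first use of Grönwall (`norm_flow_sub_le`); a second use bounds the error. All estimates are carried
out in the sup norm, which is equivalent to the ℓ¹ norm.
-/

open Finset Filter Topology

/-! ### Elementary bounds in the sup norm -/

lemma l1_le_norm {d : ℕ} (v : Fin d → ℝ) : l1 v ≤ d * ‖v‖ := by
  unfold l1
  calc ∑ z, |v z| ≤ ∑ _z : Fin d, ‖v‖ := Finset.sum_le_sum fun z _ => norm_le_pi_norm v z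
    _ = d * ‖v‖ := by simp

lemma norm_le_l1 {d : ℕ} (v : Fin d → ℝ) : ‖v‖ ≤ l1 v := by
  have h0 : 0 ≤ l1 v := Finset.sum_nonneg fun z _ => abs_nonneg _
  refine (pi_norm_le_iff_of_nonneg h0).2 fun z => ?_
  exact Finset.single_le_sum (f := fun z => |v z|) (fun z _ => abs_nonneg _) (Finset.mem_univ z)

lemma simplex_le_one {d : ℕ} {μ : Fin d → ℝ} (hμ : μ ∈ simplex d) (z : Fin d) : μ z ≤ 1 := by
  rw [← hμ.2]
  exact Finset.single_le_sum (f := μ) (fun z _ => hμ.1 z) (Finset.mem_univ z)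

lemma simplex_norm_le {d : ℕ} {μ : Fin d → ℝ} (hμ : μ ∈ simplex d) : ‖μ‖ ≤ 1 := by
  refine (pi_norm_le_iff_of_nonneg zero_le_one).2 fun z => ?_
  rw [Real.norm_eq_abs, abs_of_nonneg (hμ.1 z)]
  exact simplex_le_one hμ z

lemma simplex_sub_norm_le {d : ℕ} {μ ν : Fin d → ℝ} (hμ : μ ∈ simplex d) (hν : ν ∈ simplex d) :
    ‖μ - ν‖ ≤ 1 := by
  refine (pi_norm_le_iff_of_nonneg zero_le_one).2 fun z => ?_
  rw [Real.norm_eq_abs, Pi.sub_apply, abs_le]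
  have h1 := hμ.1 z
  have h2 := hν.1 z
  have h3 := simplex_le_one hμ z
  have h4 := simplex_le_one hν z
  constructor <;> linarith

lemma simplex_segment {d : ℕ} {μ ν : Fin d → ℝ} (hμ : μ ∈ simplex d) (hν : ν ∈ simplex d)
    {s : ℝ} (h0 : 0 ≤ s) (h1 : s ≤ 1) : (1 - s) • μ + s • ν ∈ simplex d :=
  convex_stdSimplex ℝ (Fin d) hμ hν (by linarith) h0 (by ring)

lemma sum_bvec_mul {d : ℕ} (z : Fin d) (f : Fin d → ℝ) : ∑ y, bvec z y * f y = f z := by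
  simp [bvec]

lemma abs_sum_mul_le {d : ℕ} {v w : Fin d → ℝ} {a : ℝ} (hw : ∀ z, |w z| ≤ a) :
    |∑ z, v z * w z| ≤ d * (‖v‖ * a) := by
  calc |∑ z, v z * w z| ≤ ∑ z, |v z * w z| := Finset.abs_sum_le_sum_abs _ _
    _ ≤ ∑ _z : Fin d, ‖v‖ * a := Finset.sum_le_sum fun z _ => by
        rw [abs_mul]
        exact mul_le_mul (norm_le_pi_norm v z) (hw z) (abs_nonneg _) (norm_nonneg _)
    _ = d * (‖v‖ * a) := by simp

lemma abs_sum_simplex_mul_le {d : ℕ} {v w : Fin d → ℝ} {a : ℝ} (hv : v ∈ simplex d)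
    (hw : ∀ z, |w z| ≤ a) : |∑ z, v z * w z| ≤ a := by
  calc |∑ z, v z * w z| ≤ ∑ z, |v z * w z| := Finset.abs_sum_le_sum_abs _ _
    _ ≤ ∑ z, v z * a := Finset.sum_le_sum fun z _ => by
        rw [abs_mul, abs_of_nonneg (hv.1 z)]
        exact mul_le_mul_of_nonneg_left (hw z) (hv.1 z)
    _ = a := by rw [← Finset.sum_mul, hv.2, one_mul]

lemma norm_vecMul_le {d : ℕ} {v : Fin d → ℝ} {M : Matrix (Fin d) (Fin d) ℝ} {a : ℝ} (ha : 0 ≤ a)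
    (hM : ∀ x y, |M x y| ≤ a) : ‖Matrix.vecMul v M‖ ≤ d * (‖v‖ * a) := by
  refine (pi_norm_le_iff_of_nonneg (by positivity)).2 fun y => ?_
  exact abs_sum_mul_le (w := fun x => M x y) fun x => hM x y

/-! ### Taylor estimate on the simplex -/

/-- (D-Lip) data for a scalar function, with a single constant `A` and the sup norm in place of
the ℓ¹ norm; boundedness of the function and of its derivative is included. -/
structure ScalarBounds {d : ℕ} (F : (Fin d → ℝ) → ℝ) (δF : (Fin d → ℝ) → Fin d → ℝ)
    (A : ℝ) : Prop where
  nonneg : 0 ≤ A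
  lip : ∀ μ ∈ simplex d, ∀ ν ∈ simplex d, |F μ - F ν| ≤ A * ‖μ - ν‖
  deriv : ∀ μ ∈ simplex d, ∀ z, HasLFDerivAt F μ z (δF μ z)
  lipDeriv : ∀ μ ∈ simplex d, ∀ ν ∈ simplex d, ∀ z, |δF μ z - δF ν z| ≤ A * ‖μ - ν‖
  bound : ∀ μ ∈ simplex d, |F μ| ≤ A
  boundDeriv : ∀ μ ∈ simplex d, ∀ z, |δF μ z| ≤ A

lemma DLipR.exists_scalarBounds {d : ℕ} {F : (Fin d → ℝ) → ℝ} {δF : (Fin d → ℝ) → Fin d → ℝ}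
    (h : DLipR F δF) : ∃ A, ScalarBounds F δF A := by
  obtain ⟨⟨K, hK⟩, hD, ⟨K', hK'⟩⟩ := h
  rcases (simplex d).eq_empty_or_nonempty with he | ⟨μ₀, h₀⟩
  · exact ⟨0, le_rfl, by simp [he], by simp [he], by simp [he], by simp [he], by simp [he]⟩
  have hKl : ∀ (k : ℝ) (v : Fin d → ℝ), k * l1 v ≤ |k| * d * ‖v‖ := fun k v => by
    have h1 : 0 ≤ l1 v := (norm_nonneg v).trans (norm_le_l1 v)
    calc k * l1 v ≤ |k| * l1 v := mul_le_mul_of_nonneg_right (le_abs_self k) h1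
      _ ≤ |k| * (d * ‖v‖) := mul_le_mul_of_nonneg_left (l1_le_norm v) (abs_nonneg k)
      _ = _ := by ring
  have hF : ∀ μ ∈ simplex d, ∀ ν ∈ simplex d, |F μ - F ν| ≤ |K| * d * ‖μ - ν‖ :=
    fun μ hμ ν hν => (hK μ hμ ν hν).trans (hKl _ _)
  have hδ : ∀ μ ∈ simplex d, ∀ ν ∈ simplex d, ∀ z, |δF μ z - δF ν z| ≤ |K'| * d * ‖μ - ν‖ :=
    fun μ hμ ν hν z => ((norm_le_pi_norm (δF μ - δF ν) z).trans (norm_le_l1 _)).trans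
      ((hK' μ hμ ν hν).trans (hKl _ _))
  have p1 : 0 ≤ |K| * d := by positivity
  have p2 : 0 ≤ |K'| * d := by positivity
  have p3 : 0 ≤ |F μ₀| := abs_nonneg _
  have p4 : 0 ≤ ‖δF μ₀‖ := norm_nonneg _
  refine ⟨|K| * d + |K'| * d + |F μ₀| + ‖δF μ₀‖, by positivity, ?_, hD, ?_, ?_, ?_⟩
  · intro μ hμ ν hν
    exact (hF μ hμ ν hν).trans (mul_le_mul_of_nonneg_right (by linarith) (norm_nonneg _))
  · intro μ hμ ν hν z
    exact (hδ μ hμ ν hν z).trans (mul_le_mul_of_nonneg_right (by linarith) (norm_nonneg _))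
  · intro μ hμ
    have h1 := hF μ hμ μ₀ h₀
    have h2 := mul_le_mul_of_nonneg_left (simplex_sub_norm_le hμ h₀) p1
    have h3 := abs_sub_abs_le_abs_sub (F μ) (F μ₀)
    linarith
  · intro μ hμ z
    have h1 := hδ μ hμ μ₀ h₀ z
    have h2 := mul_le_mul_of_nonneg_left (simplex_sub_norm_le hμ h₀) p2
    have h3 := abs_sub_abs_le_abs_sub (δF μ z) (δF μ₀ z)
    have h4 : |δF μ₀ z| ≤ ‖δF μ₀‖ := norm_le_pi_norm (δF μ₀) z
    linarith

lemma ScalarBounds.mono {d : ℕ} {F : (Fin d → ℝ) → ℝ} {δF : (Fin d → ℝ) → Fin d → ℝ} {A B : ℝ}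
    (h : ScalarBounds F δF A) (hAB : A ≤ B) : ScalarBounds F δF B where
  nonneg := h.nonneg.trans hAB
  lip μ hμ ν hν := (h.lip μ hμ ν hν).trans (mul_le_mul_of_nonneg_right hAB (norm_nonneg _))
  deriv := h.deriv
  lipDeriv μ hμ ν hν z :=
    (h.lipDeriv μ hμ ν hν z).trans (mul_le_mul_of_nonneg_right hAB (norm_nonneg _))
  bound μ hμ := (h.bound μ hμ).trans hAB
  boundDeriv μ hμ z := (h.boundDeriv μ hμ z).trans hAB

/-- A directional derivative towards `ν` at the point `(1 - s) μ + s ν` yields the right derivative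
of `F` along the segment from `μ` to `ν`; the factor `1 - s` is the fraction of the segment
remaining. -/
lemma hasDerivWithinAt_segment {d : ℕ} {F : (Fin d → ℝ) → ℝ} {μ ν : Fin d → ℝ} {s v : ℝ}
    (hs : s < 1)
    (h : Tendsto (fun ε : ℝ => (F ((1 - ε) • ((1 - s) • μ + s • ν) + ε • ν)
      - F ((1 - s) • μ + s • ν)) / ε) (𝓝[>] 0) (𝓝 v)) :
    HasDerivWithinAt (fun t : ℝ => F ((1 - t) • μ + t • ν)) (v / (1 - s)) (Set.Ici s) s := by
  have h1s : 0 < 1 - s := by linarith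
  rw [← hasDerivWithinAt_Ioi_iff_Ici, hasDerivWithinAt_iff_tendsto_slope' (by simp)]
  have hlim : Tendsto (fun t : ℝ => (t - s) / (1 - s)) (𝓝[>] s) (𝓝[>] 0) := by
    refine tendsto_nhdsWithin_iff.2 ⟨?_, ?_⟩
    · have : Tendsto (fun t : ℝ => (t - s) / (1 - s)) (𝓝 s) (𝓝 ((s - s) / (1 - s))) :=
        Continuous.tendsto (by fun_prop) s
      simp only [sub_self, zero_div] at this
      exact this.mono_left nhdsWithin_le_nhds
    · filter_upwards [self_mem_nhdsWithin] with t ht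
      exact div_pos (sub_pos.2 ht) h1s
  refine ((h.comp hlim).div_const (1 - s)).congr' ?_
  filter_upwards [self_mem_nhdsWithin] with t ht
  have hts : t - s ≠ 0 := (sub_pos.2 ht).ne'
  have hpt : (1 - (t - s) / (1 - s)) • ((1 - s) • μ + s • ν) + ((t - s) / (1 - s)) • ν
      = (1 - t) • μ + t • ν := by
    ext x
    simp only [Pi.add_apply, Pi.smul_apply, smul_eq_mul]
    field_simp
    ring
  simp only [Function.comp_apply, hpt, slope_def_field]
  field_simp

/-- If the right derivative of `f` stays within `C` of `c`, then `f` stays within `C b` of the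
affine function of slope `c`. -/
lemma abs_sub_le_of_right_deriv {f f' : ℝ → ℝ} {b c C : ℝ} (hb : 0 ≤ b)
    (hf : ContinuousOn f (Set.Icc 0 b))
    (hf' : ∀ s ∈ Set.Ico 0 b, HasDerivWithinAt f (f' s) (Set.Ici s) s)
    (hC : ∀ s ∈ Set.Ico 0 b, |f' s - c| ≤ C) : |f b - f 0 - b * c| ≤ C * b := by
  have h := norm_image_sub_le_of_norm_deriv_right_le_segment
    (f := fun s => f s - s * c) (f' := fun s => f' s - c) (C := C) (a := 0) (b := b)
    (by fun_prop)
    (fun s hs => by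
      have := (hf' s hs).sub (((hasDerivAt_id s).mul_const c).hasDerivWithinAt (s := Set.Ici s))
      rw [one_mul] at this
      exact this)
    hC b ⟨hb, le_rfl⟩
  rw [Real.norm_eq_abs] at h
  convert h using 2 <;> ring

lemma ScalarBounds.continuousOn_segment {d : ℕ} {F : (Fin d → ℝ) → ℝ}
    {δF : (Fin d → ℝ) → Fin d → ℝ} {A : ℝ} (h : ScalarBounds F δF A) {μ ν : Fin d → ℝ}
    (hμ : μ ∈ simplex d) (hν : ν ∈ simplex d) {b : ℝ} (hb : b ≤ 1) :
    ContinuousOn (fun t : ℝ => F ((1 - t) • μ + t • ν)) (Set.Icc 0 b) := by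
  have hF : ContinuousOn F (simplex d) := by
    have : LipschitzOnWith ⟨A, h.nonneg⟩ F (simplex d) :=
      LipschitzOnWith.of_dist_le_mul fun x hx y hy => by
        rw [Real.dist_eq, dist_eq_norm]
        exact h.lip x hx y hy
    exact this.continuousOn
  refine hF.comp (f := fun t : ℝ => (1 - t) • μ + t • ν) (by fun_prop) fun t ht => ?_
  exact simplex_segment hμ hν ht.1 (ht.2.trans hb)

/-- Directions `ν` in the simplex for which moving a fraction `ε ≤ 1/2` of the way from `μ` to `ν` changes
`F` by `ε ∑ z, ν z * δF(μ, z)` up to `O(ε²)`, uniformly in the base point `μ`. -/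
def goodDirections {d : ℕ} (F : (Fin d → ℝ) → ℝ) (δF : (Fin d → ℝ) → Fin d → ℝ) :
    Set (Fin d → ℝ) :=
  {ν | ν ∈ simplex d ∧ ∃ C, 0 ≤ C ∧ ∀ μ ∈ simplex d, ∀ ε : ℝ, 0 ≤ ε → ε ≤ 1 / 2 →
    |F ((1 - ε) • μ + ε • ν) - F μ - ε * ∑ z, ν z * δF μ z| ≤ C * ε ^ 2}

/-- The right derivative of `F` on the segment from `μ` to a vertex `z` is `δF(·, z) / (1 - s)`,
which is Lipschitz in `s ≤ 1/2` uniformly in `μ`. -/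
lemma ScalarBounds.bvec_mem_good {d : ℕ} {F : (Fin d → ℝ) → ℝ} {δF : (Fin d → ℝ) → Fin d → ℝ}
    {A : ℝ} (h : ScalarBounds F δF A) (z : Fin d) : bvec z ∈ goodDirections F δF := by
  refine ⟨bvec_mem z, 4 * A, by linarith [h.nonneg], fun μ hμ ε h0 h1 => ?_⟩
  rw [sum_bvec_mul]
  have key := abs_sub_le_of_right_deriv (f := fun t : ℝ => F ((1 - t) • μ + t • bvec z))
    (f' := fun s => δF ((1 - s) • μ + s • bvec z) z / (1 - s)) (c := δF μ z) (C := 4 * A * ε) h0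
    (h.continuousOn_segment hμ (bvec_mem z) (by linarith))
    (fun s hs => hasDerivWithinAt_segment (by linarith [hs.2])
      (h.deriv _ (simplex_segment hμ (bvec_mem z) hs.1 (by linarith [hs.2])) z))
    (fun s hs => by
      obtain ⟨hs0, hs1⟩ := hs
      have hp := simplex_segment hμ (bvec_mem z) hs0 (by linarith)
      set p := (1 - s) • μ + s • bvec z with hpdef
      have hpn : ‖p - μ‖ ≤ s := by
        have : p - μ = s • (bvec z - μ) := by rw [hpdef]; module
        rw [this, norm_smul, Real.norm_eq_abs, abs_of_nonneg hs0]
        exact mul_le_of_le_one_right hs0 (simplex_sub_norm_le (bvec_mem z) hμ)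
      have e1 : |δF p z - δF μ z| ≤ A * s :=
        (h.lipDeriv p hp μ hμ z).trans (mul_le_mul_of_nonneg_left hpn h.nonneg)
      have e2 : |s * δF μ z| ≤ A * s := by
        rw [abs_mul, abs_of_nonneg hs0, mul_comm]
        exact mul_le_mul_of_nonneg_right (h.boundDeriv μ hμ z) hs0
      have h1s : 0 < 1 - s := by linarith
      have e3 : δF p z / (1 - s) - δF μ z = ((δF p z - δF μ z) + s * δF μ z) / (1 - s) := by
        field_simp
        ring
      rw [e3, abs_div, abs_of_pos h1s, div_le_iff₀ h1s]
      have e4 := abs_add_le (δF p z - δF μ z) (s * δF μ z)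
      have hA := h.nonneg
      have e5 : A * s ≤ A * ε := mul_le_mul_of_nonneg_left hs1.le hA
      have e6 : 4 * A * ε * (1 / 2) ≤ 4 * A * ε * (1 - s) :=
        mul_le_mul_of_nonneg_left (by linarith) (by positivity)
      linarith)
  simp only [sub_zero, one_smul, zero_smul, add_zero] at key
  calc _ ≤ 4 * A * ε * ε := key
    _ = _ := by ring

/-- Moving first towards `ν₁` and then towards `ν₂` agrees to second order with moving towards the
convex combination, so the good directions form a convex set. -/
lemma ScalarBounds.convex_good {d : ℕ} {F : (Fin d → ℝ) → ℝ} {δF : (Fin d → ℝ) → Fin d → ℝ}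
    {A : ℝ} (h : ScalarBounds F δF A) : Convex ℝ (goodDirections F δF) := by
  rintro ν₁ ⟨hν₁, C₁, hC₁, H₁⟩ ν₂ ⟨hν₂, C₂, hC₂, H₂⟩ a b ha hb hab
  have hA := h.nonneg
  refine ⟨convex_stdSimplex ℝ (Fin d) hν₁ hν₂ ha hb hab, A + A + C₁ + C₂, by positivity,
    fun μ hμ ε h0 h1 => ?_⟩
  have ha1 : a ≤ 1 := by linarith
  have hb1 : b ≤ 1 := by linarith
  have hεa0 : 0 ≤ ε * a := by positivity
  have hεb0 : 0 ≤ ε * b := by positivity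
  have hεa : ε * a ≤ ε := mul_le_of_le_one_right h0 ha1
  have hεb : ε * b ≤ ε := mul_le_of_le_one_right h0 hb1
  have hp : (1 - ε * a) • μ + (ε * a) • ν₁ ∈ simplex d :=
    simplex_segment hμ hν₁ hεa0 (by linarith)
  have S₁ := H₁ μ hμ (ε * a) hεa0 (by linarith)
  set p := (1 - ε * a) • μ + (ε * a) • ν₁ with hpdef
  have S₂ := H₂ p hp (ε * b) hεb0 (by linarith)
  have hr : (1 - ε * b) • p + (ε * b) • ν₂ ∈ simplex d :=
    simplex_segment hp hν₂ hεb0 (by linarith)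
  set r := (1 - ε * b) • p + (ε * b) • ν₂ with hrdef
  have ht : (1 - ε) • μ + ε • (a • ν₁ + b • ν₂) ∈ simplex d :=
    simplex_segment hμ (convex_stdSimplex ℝ (Fin d) hν₁ hν₂ ha hb hab) h0 (by linarith)
  set t := (1 - ε) • μ + ε • (a • ν₁ + b • ν₂) with htdef
  have htr : t - r = (ε * a * (ε * b)) • (ν₁ - μ) := by
    rw [htdef, hrdef, hpdef]
    obtain rfl : b = 1 - a := by linarith
    module
  have hpm : p - μ = (ε * a) • (ν₁ - μ) := by rw [hpdef]; module
  have n1 := simplex_sub_norm_le hν₁ hμ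
  have S₃ : |F t - F r| ≤ A * ε ^ 2 := by
    refine (h.lip t ht r hr).trans (mul_le_mul_of_nonneg_left ?_ hA)
    rw [htr, norm_smul, Real.norm_eq_abs, abs_of_nonneg (mul_nonneg hεa0 hεb0)]
    have : ε * a * (ε * b) ≤ ε ^ 2 := by
      rw [sq]
      exact mul_le_mul hεa hεb hεb0 h0
    exact (mul_le_of_le_one_right (mul_nonneg hεa0 hεb0) n1).trans this
  have S₄ : |∑ z, ν₂ z * (δF p z - δF μ z)| ≤ A * ε := by
    refine abs_sum_simplex_mul_le (w := fun z => δF p z - δF μ z) hν₂ fun z => ?_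
    refine (h.lipDeriv p hp μ hμ z).trans (mul_le_mul_of_nonneg_left ?_ hA)
    rw [hpm, norm_smul, Real.norm_eq_abs, abs_of_nonneg hεa0]
    exact (mul_le_of_le_one_right hεa0 n1).trans hεa
  have S₅ : |ε * b * ∑ z, ν₂ z * (δF p z - δF μ z)| ≤ A * ε ^ 2 := by
    rw [abs_mul, abs_of_nonneg hεb0]
    calc ε * b * _ ≤ ε * (A * ε) := mul_le_mul hεb S₄ (abs_nonneg _) h0
      _ = A * ε ^ 2 := by ring
  have q₁ : C₁ * (ε * a) ^ 2 ≤ C₁ * ε ^ 2 := by gcongr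
  have q₂ : C₂ * (ε * b) ^ 2 ≤ C₂ * ε ^ 2 := by gcongr
  have hsum : F t - F μ - ε * ∑ z, (a • ν₁ + b • ν₂) z * δF μ z
      = (F t - F r) + (F r - F p - ε * b * ∑ z, ν₂ z * δF p z)
        + (F p - F μ - ε * a * ∑ z, ν₁ z * δF μ z)
        + ε * b * ∑ z, ν₂ z * (δF p z - δF μ z) := by
    simp only [Pi.add_apply, Pi.smul_apply, smul_eq_mul, add_mul, mul_sub, Finset.sum_add_distrib,
      Finset.sum_sub_distrib, mul_assoc, ← Finset.mul_sum]
    ring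
  rw [hsum]
  rw [abs_le] at *
  constructor <;> linarith [S₁.1, S₁.2]

lemma ScalarBounds.mem_good {d : ℕ} {F : (Fin d → ℝ) → ℝ} {δF : (Fin d → ℝ) → Fin d → ℝ}
    {A : ℝ} (h : ScalarBounds F δF A) {ν : Fin d → ℝ} (hν : ν ∈ simplex d) :
    ν ∈ goodDirections F δF := by
  have h1 : ν ∈ convexHull ℝ (Set.range fun i j : Fin d => if i = j then (1 : ℝ) else 0) := by
    rw [convexHull_basis_eq_stdSimplex]
    exact hν
  refine convexHull_min ?_ h.convex_good h1
  rintro _ ⟨z, rfl⟩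
  have : (fun j : Fin d => if z = j then (1 : ℝ) else 0) = bvec z := by
    ext j
    simp [bvec, eq_comm]
  beta_reduce
  rw [this]
  exact h.bvec_mem_good z

lemma ScalarBounds.tendsto_direction {d : ℕ} {F : (Fin d → ℝ) → ℝ}
    {δF : (Fin d → ℝ) → Fin d → ℝ} {A : ℝ} (h : ScalarBounds F δF A) {μ ν : Fin d → ℝ}
    (hμ : μ ∈ simplex d) (hν : ν ∈ simplex d) :
    Tendsto (fun ε : ℝ => (F ((1 - ε) • μ + ε • ν) - F μ) / ε) (𝓝[>] 0)
      (𝓝 (∑ z, ν z * δF μ z)) := by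
  obtain ⟨-, C, -, H⟩ := h.mem_good hν
  rw [tendsto_iff_dist_tendsto_zero]
  have hlim : Tendsto (fun ε : ℝ => C * ε) (𝓝[>] 0) (𝓝 0) := by
    have : Tendsto (fun ε : ℝ => C * ε) (𝓝 0) (𝓝 (C * 0)) := Continuous.tendsto (by fun_prop) 0
    rw [mul_zero] at this
    exact this.mono_left nhdsWithin_le_nhds
  refine squeeze_zero' (Eventually.of_forall fun _ => dist_nonneg) ?_ hlim
  filter_upwards [Ioo_mem_nhdsGT (show (0 : ℝ) < 1 / 2 by norm_num)] with ε hε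
  have := H μ hμ ε hε.1.le hε.2.le
  have e : (F ((1 - ε) • μ + ε • ν) - F μ) / ε - ∑ z, ν z * δF μ z
      = (F ((1 - ε) • μ + ε • ν) - F μ - ε * ∑ z, ν z * δF μ z) / ε := by
    have := hε.1.ne'
    field_simp
  rw [Real.dist_eq, e, abs_div, abs_of_pos hε.1, div_le_iff₀ hε.1]
  calc _ ≤ C * ε ^ 2 := this
    _ = _ := by ring

/-- Centering of the linear functional derivative: it is the derivative of `F` at `μ` in the
direction `μ - μ = 0`. -/
lemma ScalarBounds.sum_self {d : ℕ} {F : (Fin d → ℝ) → ℝ}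
    {δF : (Fin d → ℝ) → Fin d → ℝ} {A : ℝ} (h : ScalarBounds F δF A) {μ : Fin d → ℝ}
    (hμ : μ ∈ simplex d) : ∑ z, μ z * δF μ z = 0 := by
  refine tendsto_nhds_unique (h.tendsto_direction hμ hμ) ?_
  have : (fun ε : ℝ => (F ((1 - ε) • μ + ε • μ) - F μ) / ε) = fun _ => 0 := by
    ext ε
    rw [← add_smul]
    simp
  rw [this]
  exact tendsto_const_nhds

/-- Second-order remainder bound for `F` on the simplex. -/
lemma ScalarBounds.taylor {d : ℕ} {F : (Fin d → ℝ) → ℝ}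
    {δF : (Fin d → ℝ) → Fin d → ℝ} {A : ℝ} (h : ScalarBounds F δF A) {μ ν : Fin d → ℝ}
    (hμ : μ ∈ simplex d) (hν : ν ∈ simplex d) :
    |F ν - F μ - ∑ z, (ν - μ) z * δF μ z| ≤ d * A * ‖ν - μ‖ ^ 2 := by
  have key := abs_sub_le_of_right_deriv (f := fun t : ℝ => F ((1 - t) • μ + t • ν))
    (f' := fun s => (∑ z, ν z * δF ((1 - s) • μ + s • ν) z) / (1 - s))
    (c := ∑ z, (ν - μ) z * δF μ z) (C := d * A * ‖ν - μ‖ ^ 2) zero_le_one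
    (h.continuousOn_segment hμ hν le_rfl)
    (fun s hs => hasDerivWithinAt_segment hs.2
      (h.tendsto_direction (simplex_segment hμ hν hs.1 hs.2.le) hν))
    (fun s hs => by
      obtain ⟨hs0, hs1⟩ := hs
      have hp := simplex_segment hμ hν hs0 hs1.le
      set p := (1 - s) • μ + s • ν with hpdef
      have h1s : 1 - s ≠ 0 := by linarith
      -- By centering, `ν` may be replaced by `ν - p = (1 - s) (ν - μ)`.
      have e1 : (∑ z, ν z * δF p z) / (1 - s) = ∑ z, (ν - μ) z * δF p z := by
        have : ∑ z, ν z * δF p z = (1 - s) * ∑ z, (ν - μ) z * δF p z := by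
          rw [← sub_zero (∑ z, ν z * δF p z), ← h.sum_self hp, ← Finset.sum_sub_distrib,
            Finset.mul_sum]
          refine Finset.sum_congr rfl fun z _ => ?_
          have : p z = (1 - s) * μ z + s * ν z := by simp [hpdef]
          simp only [Pi.sub_apply]
          linear_combination (-δF p z) * this
        rw [this]
        field_simp
      rw [e1, ← Finset.sum_sub_distrib]
      simp only [← mul_sub]
      refine (abs_sum_mul_le (w := fun z => δF p z - δF μ z) (a := A * ‖ν - μ‖)
        fun z => ?_).trans (le_of_eq (by ring))
      refine (h.lipDeriv p hp μ hμ z).trans (mul_le_mul_of_nonneg_left ?_ h.nonneg)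
      have : p - μ = s • (ν - μ) := by rw [hpdef]; module
      rw [this, norm_smul, Real.norm_eq_abs, abs_of_nonneg hs0]
      exact mul_le_of_le_one_left (norm_nonneg _) hs1.le)
  simpa using key

lemma DLipRate.exists_bounds {d : ℕ} {α : (Fin d → ℝ) → Matrix (Fin d) (Fin d) ℝ}
    {δα : (Fin d → ℝ) → Fin d → Matrix (Fin d) (Fin d) ℝ} (h : DLipRate α δα) :
    ∃ A : ℝ, 0 ≤ A ∧
      ∀ x y, ScalarBounds (fun μ => α μ x y) (fun μ z => δα μ z x y) A := by
  choose K hK using fun x y => (h x y).exists_scalarBounds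
  have h0 : ∀ x y, 0 ≤ K x y := fun x y => (hK x y).nonneg
  refine ⟨∑ x, ∑ y, K x y, Finset.sum_nonneg fun x _ => Finset.sum_nonneg fun y _ => h0 x y,
    fun x y => (hK x y).mono ?_⟩
  calc K x y ≤ ∑ y, K x y :=
        Finset.single_le_sum (f := fun y => K x y) (fun y _ => h0 x y) (Finset.mem_univ y)
    _ ≤ ∑ x, ∑ y, K x y := Finset.single_le_sum (f := fun x => ∑ y, K x y)
        (fun x _ => Finset.sum_nonneg fun y _ => h0 x y) (Finset.mem_univ x)

/-! ### The Kolmogorov vector field and its linearization -/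

section Field

variable {d : ℕ} {α : (Fin d → ℝ) → Matrix (Fin d) (Fin d) ℝ}
  {δα : (Fin d → ℝ) → Fin d → Matrix (Fin d) (Fin d) ℝ} {A : ℝ}

lemma norm_field_sub_le
    (h : ∀ x y, ScalarBounds (fun μ => α μ x y) (fun μ z => δα μ z x y) A) (hA : 0 ≤ A)
    {X Y : Fin d → ℝ} (hX : X ∈ simplex d) (hY : Y ∈ simplex d) :
    ‖Matrix.vecMul X (α X) - Matrix.vecMul Y (α Y)‖ ≤ 2 * d * A * ‖X - Y‖ := by
  have e : Matrix.vecMul X (α X) - Matrix.vecMul Y (α Y)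
      = Matrix.vecMul (X - Y) (α X) + Matrix.vecMul Y (α X - α Y) := by
    rw [Matrix.sub_vecMul, Matrix.vecMul_sub]
    abel
  have b1 : ‖Matrix.vecMul (X - Y) (α X)‖ ≤ d * (‖X - Y‖ * A) :=
    norm_vecMul_le hA fun x y => (h x y).bound X hX
  have b2 : ‖Matrix.vecMul Y (α X - α Y)‖ ≤ d * (‖Y‖ * (A * ‖X - Y‖)) :=
    norm_vecMul_le (by positivity) fun x y => (h x y).lip X hX Y hY
  have b3 : (d : ℝ) * (‖Y‖ * (A * ‖X - Y‖)) ≤ d * (1 * (A * ‖X - Y‖)) := by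
    have := simplex_norm_le hY
    gcongr
  rw [e]
  refine (norm_add_le _ _).trans ?_
  linarith

lemma norm_linOp_le
    (h : ∀ x y, ScalarBounds (fun μ => α μ x y) (fun μ z => δα μ z x y) A) (hA : 0 ≤ A)
    {Y : Fin d → ℝ} (hY : Y ∈ simplex d) (q : Fin d → ℝ) :
    ‖linOp α δα Y q‖ ≤ (d * d * A + d * A) * ‖q‖ := by
  have b1 : ‖Matrix.vecMul Y (∑ z, q z • δα Y z)‖ ≤ d * (‖Y‖ * (d * (‖q‖ * A))) := by
    refine norm_vecMul_le (by positivity) fun x y => ?_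
    simp only [Matrix.sum_apply, Matrix.smul_apply, smul_eq_mul]
    exact abs_sum_mul_le (w := fun z => δα Y z x y) fun z => (h x y).boundDeriv Y hY z
  have b2 : ‖Matrix.vecMul q (α Y)‖ ≤ d * (‖q‖ * A) :=
    norm_vecMul_le hA fun x y => (h x y).bound Y hY
  have b3 : (d : ℝ) * (‖Y‖ * (d * (‖q‖ * A))) ≤ d * (1 * (d * (‖q‖ * A))) := by
    have := simplex_norm_le hY
    gcongr
  unfold linOp
  refine (norm_add_le _ _).trans ?_
  linarith

lemma linOp_sub (Y q r : Fin d → ℝ) :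
    linOp α δα Y (q - r) = linOp α δα Y q - linOp α δα Y r := by
  unfold linOp
  simp only [Pi.sub_apply, sub_smul, Finset.sum_sub_distrib, Matrix.vecMul_sub, Matrix.sub_vecMul]
  abel

/-- The field `X ↦ X α(X)` differs from its linearization by a quadratic remainder. -/
lemma norm_field_taylor_le
    (h : ∀ x y, ScalarBounds (fun μ => α μ x y) (fun μ z => δα μ z x y) A) (hA : 0 ≤ A)
    {X Y : Fin d → ℝ} (hX : X ∈ simplex d) (hY : Y ∈ simplex d) :
    ‖Matrix.vecMul X (α X) - Matrix.vecMul Y (α Y) - linOp α δα Y (X - Y)‖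
      ≤ (d * d * A + d * A) * ‖X - Y‖ ^ 2 := by
  have e : Matrix.vecMul X (α X) - Matrix.vecMul Y (α Y) - linOp α δα Y (X - Y)
      = Matrix.vecMul (X - Y) (α X - α Y)
        + Matrix.vecMul Y (α X - α Y - ∑ z, (X - Y) z • δα Y z) := by
    unfold linOp
    simp only [Matrix.sub_vecMul, Matrix.vecMul_sub]
    abel
  have b1 : ‖Matrix.vecMul (X - Y) (α X - α Y)‖ ≤ d * (‖X - Y‖ * (A * ‖X - Y‖)) :=
    norm_vecMul_le (by positivity) fun x y => (h x y).lip X hX Y hY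
  have b2 : ‖Matrix.vecMul Y (α X - α Y - ∑ z, (X - Y) z • δα Y z)‖
      ≤ d * (‖Y‖ * (d * A * ‖X - Y‖ ^ 2)) := by
    refine norm_vecMul_le (by positivity) fun x y => ?_
    have := (h x y).taylor hY hX
    simpa only [Matrix.sub_apply, Matrix.sum_apply, Matrix.smul_apply, smul_eq_mul] using this
  have b3 : (d : ℝ) * (‖Y‖ * (d * A * ‖X - Y‖ ^ 2)) ≤ d * (1 * (d * A * ‖X - Y‖ ^ 2)) := by
    have := simplex_norm_le hY
    gcongr
  rw [e]
  refine (norm_add_le _ _).trans ?_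
  linarith

end Field

/-! ### Grönwall estimates -/

lemma norm_flow_sub_le {d : ℕ} {α : (Fin d → ℝ) → Matrix (Fin d) (Fin d) ℝ}
    {δα : (Fin d → ℝ) → Fin d → Matrix (Fin d) (Fin d) ℝ} {A : ℝ}
    (h : ∀ x y, ScalarBounds (fun μ => α μ x y) (fun μ z => δα μ z x y) A) (hA : 0 ≤ A)
    {m : ℝ → (Fin d → ℝ) → Fin d → ℝ} (hm : IsFlow α m) {T : ℝ} {μ μ' : Fin d → ℝ}
    (hμ : μ ∈ simplex d) (hμ' : μ' ∈ simplex d) {t : ℝ} (ht : t ∈ Set.Icc 0 T) :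
    ‖m t μ' - m t μ‖ ≤ Real.exp (2 * d * A * T) * ‖μ' - μ‖ := by
  obtain ⟨i, s, D⟩ := hm μ hμ
  obtain ⟨i', s', D'⟩ := hm μ' hμ'
  have HD : ∀ t, 0 ≤ t → HasDerivAt (fun s => m s μ' - m s μ)
      (Matrix.vecMul (m t μ') (α (m t μ')) - Matrix.vecMul (m t μ) (α (m t μ))) t :=
    fun t ht => (D' t ht).sub (D t ht)
  have G := norm_le_gronwallBound_of_norm_deriv_right_le (a := 0) (b := T)
    (f := fun t => m t μ' - m t μ) (δ := ‖μ' - μ‖) (K := 2 * d * A) (ε := 0)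
    (fun t ht => (HD t ht.1).continuousAt.continuousWithinAt)
    (fun t ht => (HD t ht.1).hasDerivWithinAt) (by simp [i, i'])
    (fun t ht => by
      rw [add_zero]
      exact norm_field_sub_le h hA (s' t ht.1) (s t ht.1)) t ht
  rw [gronwallBound_ε0, sub_zero] at G
  refine G.trans ?_
  rw [mul_comm]
  have := ht.2
  gcongr

/-- Finite-horizon first-order expansion of the measure flow: for `α` in
(D-Lip) and `T > 0`, with `m⁽¹⁾(t,μ,ν)` the solution of the linearized Cauchy problem
`q' = L_{m(t;μ)} q`, `q(0) = ν - μ`, there is `C₂(T)` with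
`|m(t;μ̂) - m(t;μ) - m⁽¹⁾(t,μ,μ̂)| ≤ C₂(T) |μ̂ - μ|²` for all `t ∈ [0,T]`. -/
theorem flow_first_order_expansion_finite_horizon {d : ℕ} (hd : 1 < d)
    (α : (Fin d → ℝ) → Matrix (Fin d) (Fin d) ℝ)
    (δα : (Fin d → ℝ) → Fin d → Matrix (Fin d) (Fin d) ℝ)
    (hα : IsRate d α) (hαD : DLipRate α δα)
    (m : ℝ → (Fin d → ℝ) → Fin d → ℝ) (hm : IsFlow α m)
    (m1 : ℝ → (Fin d → ℝ) → (Fin d → ℝ) → Fin d → ℝ)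
    (hm1 : ∀ μ ∈ simplex d, ∀ ν ∈ simplex d, m1 0 μ ν = ν - μ ∧
      ∀ t : ℝ, 0 ≤ t → HasDerivAt (fun s => m1 s μ ν) (linOp α δα (m t μ) (m1 t μ ν)) t)
    (T : ℝ) (hT : 0 < T) :
    ∃ C₂ : ℝ, ∀ μ ∈ simplex d, ∀ μ' ∈ simplex d, ∀ t ∈ Set.Icc (0:ℝ) T,
      l1 (m t μ' - m t μ - m1 t μ μ') ≤ C₂ * l1 (μ' - μ) ^ 2 := by
  obtain ⟨A, hA, h⟩ := hαD.exists_bounds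
  -- Adding `1` keeps the Grönwall rate `K` nonzero.
  set K : ℝ := d * d * A + d * A + 1 with hK
  have hK0 : 0 < K := by positivity
  set E : ℝ := Real.exp (2 * d * A * T) with hE
  refine ⟨d * (E ^ 2 * Real.exp (K * T)), fun μ hμ μ' hμ' t ht => ?_⟩
  obtain ⟨i, s, D⟩ := hm μ hμ
  obtain ⟨i', s', D'⟩ := hm μ' hμ'
  obtain ⟨j, D1⟩ := hm1 μ hμ μ' hμ'
  have HD : ∀ t, 0 ≤ t → HasDerivAt (fun s => m s μ' - m s μ - m1 s μ μ')
      (Matrix.vecMul (m t μ') (α (m t μ')) - Matrix.vecMul (m t μ) (α (m t μ))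
        - linOp α δα (m t μ) (m1 t μ μ')) t :=
    fun t ht => ((D' t ht).sub (D t ht)).sub (D1 t ht)
  have G := norm_le_gronwallBound_of_norm_deriv_right_le (a := 0) (b := T)
    (f := fun t => m t μ' - m t μ - m1 t μ μ') (δ := 0) (K := K) (ε := K * (E * ‖μ' - μ‖) ^ 2)
    (fun t ht => (HD t ht.1).continuousAt.continuousWithinAt)
    (fun t ht => (HD t ht.1).hasDerivWithinAt) (by simp [i, i', j])
    (fun t ht => by
      have e : Matrix.vecMul (m t μ') (α (m t μ')) - Matrix.vecMul (m t μ) (α (m t μ))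
            - linOp α δα (m t μ) (m1 t μ μ')
          = linOp α δα (m t μ) (m t μ' - m t μ - m1 t μ μ')
            + (Matrix.vecMul (m t μ') (α (m t μ')) - Matrix.vecMul (m t μ) (α (m t μ))
              - linOp α δα (m t μ) (m t μ' - m t μ)) := by
        rw [linOp_sub _ (m t μ' - m t μ)]
        abel
      have b1 := norm_linOp_le h hA (s t ht.1) (m t μ' - m t μ - m1 t μ μ')
      have b2 := norm_field_taylor_le h hA (s' t ht.1) (s t ht.1)
      have b3 := norm_flow_sub_le h hA hm hμ hμ' (Set.Ico_subset_Icc_self ht)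
      have b4 : (d * d * A + d * A) * ‖m t μ' - m t μ‖ ^ 2 ≤ K * (E * ‖μ' - μ‖) ^ 2 := by
        have : d * d * A + d * A ≤ K := by linarith
        gcongr
      have b5 : (d * d * A + d * A) * ‖m t μ' - m t μ - m1 t μ μ'‖
          ≤ K * ‖m t μ' - m t μ - m1 t μ μ'‖ :=
        mul_le_mul_of_nonneg_right (by linarith) (norm_nonneg _)
      rw [e]
      refine (norm_add_le _ _).trans ?_
      linarith) t ht
  rw [gronwallBound_of_K_ne_0 hK0.ne', mul_div_cancel_left₀ _ hK0.ne'] at G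
  simp only [sub_zero, zero_mul, zero_add] at G
  have hexp : Real.exp (K * t) - 1 ≤ Real.exp (K * T) := by
    have : Real.exp (K * t) ≤ Real.exp (K * T) :=
      Real.exp_le_exp.2 (mul_le_mul_of_nonneg_left ht.2 hK0.le)
    linarith
  calc l1 (m t μ' - m t μ - m1 t μ μ') ≤ d * ‖m t μ' - m t μ - m1 t μ μ'‖ := l1_le_norm _
    _ ≤ d * ((E * ‖μ' - μ‖) ^ 2 * Real.exp (K * T)) := by
        refine mul_le_mul_of_nonneg_left (G.trans ?_) (Nat.cast_nonneg d)
        exact mul_le_mul_of_nonneg_left hexp (by positivity)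
    _ = d * (E ^ 2 * Real.exp (K * T)) * ‖μ' - μ‖ ^ 2 := by ring
    _ ≤ d * (E ^ 2 * Real.exp (K * T)) * l1 (μ' - μ) ^ 2 := by
        have := norm_le_l1 (μ' - μ)
        gcongr
end
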